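/- Every function θ ∈ S⁰(N⁻, N⁺) admits a closely connected conservative realization: there exist a complex separable Hilbert space X and bounded operators A : X → X, B : N⁻ → X, C : X → N⁺, D : N⁻ → N⁺ such that G = [[A, B], [C, D]] : X ⊕ N⁻ → X ⊕ N⁺ is unitary, X equals the closed linear span of the vectors p(A, A*)x where p runs over all finite words in A and A* and x runs over B N⁻ ∪ C* N⁺, and θ(z) = zD + zC(I_X − zA)⁻¹zB for all z ∈ D. Moreover this realization is unique up to unitary similarity: if (A′, B′, C′, D′; X′) is another such closely connected conservative realization of θ, then D′ = D and there is a unitary operator U : X → X′ with A′U = UA, B′ = UB, and C′U = C. -/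

import Mathlib

open ContinuousLinearMap Metric

noncomputable section

/-- The block operator `[[A, B], [C, D]] : X ⊕ N⁻ → X ⊕ N⁺` (Hilbert space direct sum). -/
def blockOp {X Nm Np : Type*}
    [NormedAddCommGroup X] [InnerProductSpace ℂ X]
    [NormedAddCommGroup Nm] [InnerProductSpace ℂ Nm]
    [NormedAddCommGroup Np] [InnerProductSpace ℂ Np]
    (A : X →L[ℂ] X) (B : Nm →L[ℂ] X) (C : X →L[ℂ] Np) (D : Nm →L[ℂ] Np) :
    WithLp 2 (X × Nm) →L[ℂ] WithLp 2 (X × Np) :=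
  ((WithLp.prodContinuousLinearEquiv 2 ℂ X Np).symm :
      (X × Np) →L[ℂ] WithLp 2 (X × Np)) ∘L
    ((A ∘L ContinuousLinearMap.fst ℂ X Nm + B ∘L ContinuousLinearMap.snd ℂ X Nm).prod
      (C ∘L ContinuousLinearMap.fst ℂ X Nm + D ∘L ContinuousLinearMap.snd ℂ X Nm)) ∘L
    (WithLp.prodContinuousLinearEquiv 2 ℂ X Nm : WithLp 2 (X × Nm) →L[ℂ] (X × Nm))

/-- A bounded operator between Hilbert spaces is unitary: `G*G = I` and `GG* = I`. -/
def IsUnitaryOp {E F : Type*}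
    [NormedAddCommGroup E] [InnerProductSpace ℂ E] [CompleteSpace E]
    [NormedAddCommGroup F] [InnerProductSpace ℂ F] [CompleteSpace F]
    (G : E →L[ℂ] F) : Prop :=
  adjoint G ∘L G = ContinuousLinearMap.id ℂ E ∧
    G ∘L adjoint G = ContinuousLinearMap.id ℂ F

/-- Close connectedness of a one-parametric system: `X` is the closed linear span of the
vectors `p(A, A*) x` where `p` runs over all finite words in `A, A*` and
`x ∈ B N⁻ ∪ C* N⁺`. -/
def CloselyConnected1 {X Nm Np : Type*}
    [NormedAddCommGroup X] [InnerProductSpace ℂ X] [CompleteSpace X]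
    [NormedAddCommGroup Nm] [InnerProductSpace ℂ Nm] [CompleteSpace Nm]
    [NormedAddCommGroup Np] [InnerProductSpace ℂ Np] [CompleteSpace Np]
    (A : X →L[ℂ] X) (B : Nm →L[ℂ] X) (C : X →L[ℂ] Np) : Prop :=
  (Submodule.span ℂ {x : X | ∃ (w : List Bool) (y : X),
      ((∃ u, y = B u) ∨ (∃ v, y = adjoint C v)) ∧
      x = ((w.map fun b => cond b A (adjoint A)).prod) y}).topologicalClosure = ⊤

/-- `(A, B, C, D; X)` is a closely connected conservative realization of `θ`:
the system matrix is unitary, the system is closely connected, and on the open unit disc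
`I_X − zA` is invertible with `θ(z) = zD + zC (I_X − zA)⁻¹ zB`. -/
def IsCCConservativeRealization {Nm Np : Type*}
    [NormedAddCommGroup Nm] [InnerProductSpace ℂ Nm] [CompleteSpace Nm]
    [NormedAddCommGroup Np] [InnerProductSpace ℂ Np] [CompleteSpace Np]
    (θ : ℂ → (Nm →L[ℂ] Np))
    (X : Type*) [NormedAddCommGroup X] [InnerProductSpace ℂ X] [CompleteSpace X]
    (A : X →L[ℂ] X) (B : Nm →L[ℂ] X) (C : X →L[ℂ] Np) (D : Nm →L[ℂ] Np) : Prop :=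
  IsUnitaryOp (blockOp A B C D) ∧ CloselyConnected1 A B C ∧
    ∀ z ∈ ball (0 : ℂ) 1, IsUnit ((1 : X →L[ℂ] X) - z • A) ∧
      θ z = z • D + (z • C) ∘L (Ring.inverse (1 - z • A)) ∘L (z • B)

open scoped InnerProductSpace

/-- Two families with equal Gram matrices and dense spans are unitarily equivalent. -/
theorem exists_unitary_of_gram {ι H H' : Type*}
    [NormedAddCommGroup H] [InnerProductSpace ℂ H] [CompleteSpace H]
    [NormedAddCommGroup H'] [InnerProductSpace ℂ H'] [CompleteSpace H']
    (φ : ι → H) (ψ : ι → H') (hg : ∀ i j, inner ℂ (φ i) (φ j) = inner ℂ (ψ i) (ψ j))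
    (hφ : (Submodule.span ℂ (Set.range φ)).topologicalClosure = ⊤)
    (hψ : (Submodule.span ℂ (Set.range ψ)).topologicalClosure = ⊤) :
    ∃ U : H ≃ₗᵢ[ℂ] H', ∀ i, U (φ i) = ψ i := by
  have hd1 : DenseRange (Finsupp.linearCombination ℂ φ) := by
    have h := Submodule.dense_iff_topologicalClosure_eq_top.2 hφ
    rw [← Finsupp.range_linearCombination] at h
    exact h
  have hd2 : DenseRange (Finsupp.linearCombination ℂ ψ) := by
    have h := Submodule.dense_iff_topologicalClosure_eq_top.2 hψ
    rw [← Finsupp.range_linearCombination] at h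
    exact h
  have hn : ∀ x : ι →₀ ℂ, ‖Finsupp.linearCombination ℂ ψ ((LinearEquiv.refl ℂ (ι →₀ ℂ)) x)‖
      = ‖Finsupp.linearCombination ℂ φ x‖ := by
    intro x
    simp only [LinearEquiv.refl_apply]
    have h2 : inner ℂ (Finsupp.linearCombination ℂ ψ x) (Finsupp.linearCombination ℂ ψ x)
      = inner ℂ (Finsupp.linearCombination ℂ φ x) (Finsupp.linearCombination ℂ φ x) := by
      simp only [Finsupp.linearCombination_apply, Finsupp.sum, sum_inner, inner_sum,
        inner_smul_left, inner_smul_right, hg]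
    rw [inner_self_eq_norm_sq_to_K, inner_self_eq_norm_sq_to_K] at h2
    have h3 : ‖Finsupp.linearCombination ℂ ψ x‖ ^ 2 = ‖Finsupp.linearCombination ℂ φ x‖ ^ 2 := by
      exact_mod_cast h2
    exact (sq_eq_sq₀ (norm_nonneg _) (norm_nonneg _)).1 h3
  refine ⟨(LinearEquiv.refl ℂ (ι →₀ ℂ)).extendOfIsometry _ _ hd1 hd2 hn, fun i => ?_⟩
  have := LinearEquiv.extendOfIsometry_eq (LinearEquiv.refl ℂ (ι →₀ ℂ)) _ _ hd1 hd2 hn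
    (Finsupp.single i 1)
  simpa using this

theorem integral_exp_int (n : ℤ) :
    ∫ t in (0:ℝ)..2 * Real.pi, Complex.exp (n * Complex.I * t) =
      if n = 0 then (2 * Real.pi : ℂ) else 0 := by
  split_ifs with h
  · simp [h]
  · rw [integral_exp_mul_complex (by simp [h])]
    have : Complex.exp ((n:ℂ) * Complex.I * ((2 * Real.pi : ℝ) : ℂ)) = 1 := by
      rw [Complex.exp_eq_one_iff]
      exact ⟨n, by push_cast; ring⟩
    rw [this]; simp

theorem summable_norm_of_hasSum_ball {E : Type*} [NormedAddCommGroup E] [NormedSpace ℂ E]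
    (a : ℕ → E) (f : ℂ → E)
    (hf : ∀ z ∈ ball (0 : ℂ) 1, HasSum (fun k => z ^ k • a k) (f z))
    (r : ℝ) (hr0 : 0 ≤ r) (hr1 : r < 1) : Summable (fun k => r ^ k * ‖a k‖) := by
  obtain ⟨ρ, h1, h2⟩ := exists_between hr1
  have hρ0 : 0 < ρ := lt_of_le_of_lt hr0 h1
  have hs := (hf (ρ : ℂ) (by simp [abs_of_pos hρ0, h2])).summable.tendsto_atTop_zero
  obtain ⟨M, hM⟩ := hs.norm.bddAbove_range
  have hgeo : Summable (fun k : ℕ => M * (r / ρ) ^ k) :=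
    (summable_geometric_of_lt_one (by positivity) ((div_lt_one hρ0).2 h1)).mul_left M
  refine Summable.of_nonneg_of_le (fun k => by positivity) (fun k => ?_) hgeo
  have hk := hM ⟨k, rfl⟩
  simp only [norm_smul, norm_pow, Complex.norm_real, Real.norm_eq_abs, abs_of_pos hρ0] at hk
  calc r ^ k * ‖a k‖ = (ρ ^ k * ‖a k‖) * (r / ρ) ^ k := by
        rw [div_pow]; field_simp
    _ ≤ M * (r / ρ) ^ k := by gcongr

theorem fourier_coeff_of_hasSum {E : Type*} [NormedAddCommGroup E] [NormedSpace ℂ E]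
    [CompleteSpace E] (a : ℕ → E) (f : ℂ → E)
    (hf : ∀ z ∈ ball (0 : ℂ) 1, HasSum (fun k => z ^ k • a k) (f z))
    (r : ℝ) (hr0 : 0 ≤ r) (hr1 : r < 1) (n : ℤ) :
    ∫ t in (0:ℝ)..2 * Real.pi,
      Complex.exp ((-n : ℤ) * Complex.I * t) • f (r * Complex.exp (Complex.I * t)) =
      (2 * Real.pi : ℂ) • (if 0 ≤ n then (r : ℂ) ^ n.toNat • a n.toNat else 0) := by
  have hsn := summable_norm_of_hasSum_ball a f hf r hr0 hr1
  have key : HasSum (fun k : ℕ => ∫ t in (0:ℝ)..2 * Real.pi,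
      Complex.exp ((-n : ℤ) * Complex.I * t) • ((r * Complex.exp (Complex.I * t)) ^ k • a k))
      (∫ t in (0:ℝ)..2 * Real.pi,
      Complex.exp ((-n : ℤ) * Complex.I * t) • f (r * Complex.exp (Complex.I * t))) := by
    apply intervalIntegral.hasSum_integral_of_dominated_convergence
      (fun k _ => r ^ k * ‖a k‖)
    · intro k
      apply Continuous.aestronglyMeasurable
      fun_prop
    · intro k
      refine Filter.Eventually.of_forall fun t _ => ?_
      have e1 : ‖Complex.exp ((-n : ℤ) * Complex.I * t)‖ = 1 := by
        rw [show ((-n : ℤ) * Complex.I * t : ℂ) = ((-n * t : ℝ) : ℂ) * Complex.I by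
          push_cast; ring]
        exact Complex.norm_exp_ofReal_mul_I _
      have e2 : ‖Complex.exp (Complex.I * t)‖ = 1 := by
        rw [mul_comm]; exact Complex.norm_exp_ofReal_mul_I _
      rw [norm_smul, norm_smul, norm_pow, norm_mul, e1, e2]
      simp [abs_of_nonneg hr0]
    · exact Filter.Eventually.of_forall fun t _ => hsn
    · exact intervalIntegrable_const
    · refine Filter.Eventually.of_forall fun t _ => ?_
      apply HasSum.const_smul
      apply hf
      have e2 : ‖Complex.exp (Complex.I * t)‖ = 1 := by
        rw [mul_comm]; exact Complex.norm_exp_ofReal_mul_I _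
      simp [e2, abs_of_nonneg hr0, hr1]
  have hterm : ∀ k : ℕ, (∫ t in (0:ℝ)..2 * Real.pi,
      Complex.exp ((-n : ℤ) * Complex.I * t) • ((r * Complex.exp (Complex.I * t)) ^ k • a k))
      = if (k : ℤ) = n then (2 * Real.pi : ℂ) • ((r : ℂ) ^ k • a k) else 0 := by
    intro k
    have : ∀ t : ℝ, Complex.exp ((-n : ℤ) * Complex.I * t) •
        ((r * Complex.exp (Complex.I * t)) ^ k • a k)
        = Complex.exp (((k - n : ℤ) : ℂ) * Complex.I * t) • ((r : ℂ) ^ k • a k) := by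
      intro t
      rw [smul_smul, smul_smul, mul_pow, ← Complex.exp_nat_mul]
      congr 1
      rw [mul_left_comm, ← Complex.exp_add, mul_comm]
      congr 2
      push_cast; ring
    simp_rw [this]
    rw [intervalIntegral.integral_smul_const, integral_exp_int]
    simp only [sub_eq_zero]
    split_ifs <;> simp
  simp_rw [hterm] at key
  split_ifs with hn
  · obtain ⟨m, rfl⟩ := Int.eq_ofNat_of_zero_le hn
    simp only [Nat.cast_inj, Int.toNat_natCast] at key ⊢
    refine key.unique ?_
    have := hasSum_ite_eq m ((2 * Real.pi : ℂ) • ((r : ℂ) ^ m • a m))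
    convert this using 2 with k
    split_ifs with h
    · rw [h]
    · rfl
  · refine key.unique ?_
    have : ∀ k : ℕ, ((k:ℤ) = n) = False := fun k => by
      simp; omega
    simp [this, hasSum_zero]

theorem coeff_unique {E : Type*} [NormedAddCommGroup E] [NormedSpace ℂ E]
    [CompleteSpace E] (a b : ℕ → E) (f : ℂ → E)
    (hf : ∀ z ∈ ball (0 : ℂ) 1, HasSum (fun k => z ^ k • a k) (f z))
    (hg : ∀ z ∈ ball (0 : ℂ) 1, HasSum (fun k => z ^ k • b k) (f z)) : a = b := by
  funext k
  have h1 := fourier_coeff_of_hasSum a f hf (1/2) (by norm_num) (by norm_num) k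
  have h2 := fourier_coeff_of_hasSum b f hg (1/2) (by norm_num) (by norm_num) k
  rw [h1] at h2
  simpa [Real.pi_ne_zero] using h2

theorem integral_inner_trig {E F : Type*}
    [NormedAddCommGroup E] [InnerProductSpace ℂ E] [CompleteSpace E]
    [NormedAddCommGroup F] [InnerProductSpace ℂ F] [CompleteSpace F]
    (Φ : ℝ → E →L[ℂ] F) (hΦ : Continuous Φ) (c : ℤ → E →L[ℂ] F)
    (hc : ∀ n : ℤ, ∫ t in (0:ℝ)..2 * Real.pi, Complex.exp ((-n : ℤ) * Complex.I * t) • Φ t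
      = (2 * Real.pi : ℂ) • c n)
    (s : Finset ℤ) (f : ℤ → E) (h : ℤ → F) :
    ∫ t in (0:ℝ)..2 * Real.pi,
      inner ℂ (∑ x ∈ s, Complex.exp (x * Complex.I * t) • h x)
        (Φ t (∑ x ∈ s, Complex.exp (x * Complex.I * t) • f x)) =
      (2 * Real.pi : ℂ) * ∑ x' ∈ s, ∑ x ∈ s, inner ℂ (h x') (c (x' - x) (f x)) := by
  have hpt : ∀ t : ℝ, inner ℂ (∑ x ∈ s, Complex.exp (x * Complex.I * t) • h x)
        (Φ t (∑ x ∈ s, Complex.exp (x * Complex.I * t) • f x)) =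
      ∑ x' ∈ s, ∑ x ∈ s, inner ℂ (h x')
        ((Complex.exp ((-(x' - x) : ℤ) * Complex.I * t) • Φ t) (f x)) := by
    intro t
    rw [sum_inner]
    refine Finset.sum_congr rfl fun x' _ => ?_
    rw [map_sum, inner_sum]
    refine Finset.sum_congr rfl fun x _ => ?_
    rw [map_smul, inner_smul_left, inner_smul_right, _root_.smul_apply,
      inner_smul_right, ← mul_assoc]
    congr 1
    rw [← Complex.exp_conj, ← Complex.exp_add]
    congr 1
    simp
    ring
  simp_rw [hpt]
  rw [intervalIntegral.integral_finsetSum, Finset.mul_sum]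
  · refine Finset.sum_congr rfl fun x' _ => ?_
    rw [intervalIntegral.integral_finsetSum, Finset.mul_sum]
    · refine Finset.sum_congr rfl fun x _ => ?_
      have := ContinuousLinearMap.intervalIntegral_comp_comm
        ((innerSL ℂ (h x')) ∘L (ContinuousLinearMap.apply ℂ F (f x)))
        (f := fun t : ℝ => Complex.exp ((-(x' - x) : ℤ) * Complex.I * t) • Φ t)
        (μ := MeasureTheory.volume) (a := 0) (b := 2 * Real.pi)
        (Continuous.intervalIntegrable (by fun_prop) _ _)
      rw [hc] at this
      simp only [ContinuousLinearMap.comp_apply, ContinuousLinearMap.apply_apply,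
        innerSL_apply_apply] at this
      rw [this, _root_.smul_apply, inner_smul_right]
    · intro x _
      exact Continuous.intervalIntegrable (by fun_prop) _ _
  · intro x _
    exact Continuous.intervalIntegrable (by fun_prop) _ _

/-- The Toeplitz symbol coefficients. -/
def symb {E : Type*} [Zero E] (a : ℕ → E) (n : ℤ) : E := if 0 ≤ n + 1 then a (n + 1).toNat else 0

theorem toeplitz_pos_r.{u} {Nm Np : Type u}
    [NormedAddCommGroup Nm] [InnerProductSpace ℂ Nm] [CompleteSpace Nm]
    [NormedAddCommGroup Np] [InnerProductSpace ℂ Np] [CompleteSpace Np]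
    (θ : ℂ → (Nm →L[ℂ] Np)) (hθ : ContinuousOn θ (ball (0 : ℂ) 1))
    (hcontr : ∀ z ∈ ball (0 : ℂ) 1, ‖θ z‖ ≤ 1) (a : ℕ → (Nm →L[ℂ] Np))
    (ha : ∀ z ∈ ball (0 : ℂ) 1, HasSum (fun k => z ^ k • a k) (θ z))
    (r : ℝ) (hr0 : 0 ≤ r) (hr1 : r < 1) (s : Finset ℤ) (f : ℤ → Nm) (g : ℤ → Np) :
    0 ≤ ∑ x ∈ s, ‖f x‖ ^ 2 + ∑ x ∈ s, ‖g x‖ ^ 2 +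
      2 * (∑ x' ∈ s, ∑ x ∈ s,
        inner ℂ (g x') (symb (fun k => (r : ℂ) ^ k • a k) (x' - x) (f x))).re := by
  have hmem : ∀ t : ℝ, (r * Complex.exp (Complex.I * t) : ℂ) ∈ ball (0:ℂ) 1 := by
    intro t
    have e2 : ‖Complex.exp (Complex.I * t)‖ = 1 := by
      rw [mul_comm]; exact Complex.norm_exp_ofReal_mul_I _
    simp [e2, abs_of_nonneg hr0, hr1]
  have hcont : Continuous (fun t : ℝ => θ (r * Complex.exp (Complex.I * t))) :=
    hθ.comp_continuous (by fun_prop) hmem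
  set Φ : ℝ → (Nm →L[ℂ] Np) := fun t =>
    Complex.exp ((-1 : ℤ) * Complex.I * t) • θ (r * Complex.exp (Complex.I * t)) with hΦdef
  have hΦ : Continuous Φ := by
    have h1 : Continuous (fun t : ℝ => Complex.exp ((-1 : ℤ) * Complex.I * t)) := by fun_prop
    exact h1.smul hcont
  have hΦn : ∀ t, ‖Φ t‖ ≤ 1 := by
    intro t
    have e1 : ‖Complex.exp ((-1 : ℤ) * Complex.I * t)‖ = 1 := by
      rw [show ((-1 : ℤ) * Complex.I * t : ℂ) = ((- t : ℝ) : ℂ) * Complex.I by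
        push_cast; ring]
      exact Complex.norm_exp_ofReal_mul_I _
    rw [hΦdef]
    simp only
    rw [norm_smul, e1, one_mul]
    exact hcontr _ (hmem t)
  have hΦc : ∀ n : ℤ, ∫ t in (0:ℝ)..2 * Real.pi, Complex.exp ((-n : ℤ) * Complex.I * t) • Φ t
      = (2 * Real.pi : ℂ) • symb (fun k => (r : ℂ) ^ k • a k) n := by
    intro n
    rw [symb, ← fourier_coeff_of_hasSum a θ ha r hr0 hr1 (n + 1)]
    congr 1
    funext t
    rw [hΦdef]
    simp only
    rw [smul_smul, ← Complex.exp_add]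
    congr 2
    push_cast; ring
  have hidc : ∀ (E : Type u) [NormedAddCommGroup E] [InnerProductSpace ℂ E] [CompleteSpace E]
      (n : ℤ), ∫ t in (0:ℝ)..2 * Real.pi, Complex.exp ((-n : ℤ) * Complex.I * t) •
        ((fun _ : ℝ => ContinuousLinearMap.id ℂ E) t)
      = (2 * Real.pi : ℂ) • (if n = 0 then ContinuousLinearMap.id ℂ E else 0) := by
    intro E _ _ _ n
    simp only
    rw [intervalIntegral.integral_smul_const, integral_exp_int]
    simp only [neg_eq_zero]
    split_ifs <;> simp
  set F : ℝ → Nm := fun t => ∑ x ∈ s, Complex.exp (x * Complex.I * t) • f x with hF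
  set G : ℝ → Np := fun t => ∑ x ∈ s, Complex.exp (x * Complex.I * t) • g x with hG
  have hFc : Continuous F := by rw [hF]; fun_prop
  have hGc : Continuous G := by rw [hG]; fun_prop
  have i1 := integral_inner_trig (fun _ => ContinuousLinearMap.id ℂ Nm) continuous_const _
    (hidc Nm) s f f
  have i2 := integral_inner_trig (fun _ => ContinuousLinearMap.id ℂ Np) continuous_const _
    (hidc Np) s g g
  have i3 := integral_inner_trig Φ hΦ _ hΦc s f g
  have hdiag : ∀ (E : Type u) [NormedAddCommGroup E] [InnerProductSpace ℂ E] (h : ℤ → E),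
      ∑ x' ∈ s, ∑ x ∈ s, inner ℂ (h x')
        ((if x' - x = 0 then ContinuousLinearMap.id ℂ E else 0) (h x))
      = ((∑ x ∈ s, ‖h x‖ ^ 2 : ℝ) : ℂ) := by
    intro E _ _ h
    push_cast
    refine Finset.sum_congr rfl fun x' hx' => ?_
    rw [Finset.sum_eq_single x']
    · simp [inner_self_eq_norm_sq_to_K]
    · intro b _ hb
      have : x' - b ≠ 0 := fun h => hb (by omega)
      simp [this]
    · intro h; exact absurd hx' h
  rw [hdiag] at i1 i2
  have hpt : ∀ t, 0 ≤ (inner ℂ (F t) (F t) + inner ℂ (G t) (G t) +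
      2 * inner ℂ (G t) (Φ t (F t)) : ℂ).re := by
    intro t
    have h1 : ‖inner ℂ (G t) (Φ t (F t))‖ ≤ ‖G t‖ * ‖F t‖ := by
      calc _ ≤ ‖G t‖ * ‖Φ t (F t)‖ := norm_inner_le_norm _ _
        _ ≤ ‖G t‖ * (1 * ‖F t‖) := by
          gcongr
          exact (Φ t).le_of_opNorm_le (hΦn t) _
        _ = _ := by ring
    have h2 := (abs_le.1 ((Complex.abs_re_le_norm (inner ℂ (G t) (Φ t (F t)))).trans h1)).1
    have e1 : (inner ℂ (F t) (F t) : ℂ).re = ‖F t‖ ^ 2 := inner_self_eq_norm_sq (𝕜 := ℂ) _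
    have e2 : (inner ℂ (G t) (G t) : ℂ).re = ‖G t‖ ^ 2 := inner_self_eq_norm_sq (𝕜 := ℂ) _
    have e3 : (2 * inner ℂ (G t) (Φ t (F t)) : ℂ).re = 2 * (inner ℂ (G t) (Φ t (F t)) : ℂ).re := by
      simp
    rw [Complex.add_re, Complex.add_re, e1, e2, e3]
    nlinarith [sq_nonneg (‖F t‖ - ‖G t‖)]
  have hintg : 0 ≤ ∫ t in (0:ℝ)..2 * Real.pi, (inner ℂ (F t) (F t) + inner ℂ (G t) (G t) +
      2 * inner ℂ (G t) (Φ t (F t)) : ℂ).re :=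
    intervalIntegral.integral_nonneg (by positivity) (fun t _ => hpt t)
  have hre := ContinuousLinearMap.intervalIntegral_comp_comm Complex.reCLM
    (f := fun t : ℝ => (inner ℂ (F t) (F t) + inner ℂ (G t) (G t) +
      2 * inner ℂ (G t) (Φ t (F t)) : ℂ))
    (μ := MeasureTheory.volume) (a := 0) (b := 2 * Real.pi)
    (Continuous.intervalIntegrable (by fun_prop) _ _)
  simp only [Complex.reCLM_apply] at hre
  rw [hre, intervalIntegral.integral_add, intervalIntegral.integral_add,
    intervalIntegral.integral_const_mul] at hintg
  rotate_left
  · exact Continuous.intervalIntegrable (by fun_prop) _ _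
  · exact Continuous.intervalIntegrable (by fun_prop) _ _
  · exact Continuous.intervalIntegrable (by fun_prop) _ _
  · exact Continuous.intervalIntegrable (by fun_prop) _ _
  simp only [ContinuousLinearMap.id_apply] at i1 i2
  rw [i1, i2, i3] at hintg
  set Z := ∑ x' ∈ s, ∑ x ∈ s,
        inner ℂ (g x') (symb (fun k => (r : ℂ) ^ k • a k) (x' - x) (f x))
  have hfin : (2 * Real.pi * ((∑ x ∈ s, ‖f x‖ ^ 2 : ℝ) : ℂ) +
      2 * Real.pi * ((∑ x ∈ s, ‖g x‖ ^ 2 : ℝ) : ℂ) + 2 * (2 * Real.pi * Z) : ℂ).re =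
      2 * Real.pi * (∑ x ∈ s, ‖f x‖ ^ 2 + ∑ x ∈ s, ‖g x‖ ^ 2 + 2 * Z.re) := by
    rw [show (2 * Real.pi * ((∑ x ∈ s, ‖f x‖ ^ 2 : ℝ) : ℂ) +
      2 * Real.pi * ((∑ x ∈ s, ‖g x‖ ^ 2 : ℝ) : ℂ) + 2 * (2 * Real.pi * Z) : ℂ) =
      ((2 * Real.pi : ℝ) : ℂ) * (((∑ x ∈ s, ‖f x‖ ^ 2 + ∑ x ∈ s, ‖g x‖ ^ 2 : ℝ) : ℂ)
        + ((2 : ℝ) : ℂ) * Z) by push_cast; ring]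
    rw [Complex.re_ofReal_mul, Complex.add_re, Complex.re_ofReal_mul, Complex.ofReal_re]
  rw [hfin] at hintg
  exact nonneg_of_mul_nonneg_right hintg (by positivity)

theorem toeplitz_pos.{u} {Nm Np : Type u}
    [NormedAddCommGroup Nm] [InnerProductSpace ℂ Nm] [CompleteSpace Nm]
    [NormedAddCommGroup Np] [InnerProductSpace ℂ Np] [CompleteSpace Np]
    (θ : ℂ → (Nm →L[ℂ] Np)) (hθ : ContinuousOn θ (ball (0 : ℂ) 1))
    (hcontr : ∀ z ∈ ball (0 : ℂ) 1, ‖θ z‖ ≤ 1) (a : ℕ → (Nm →L[ℂ] Np))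
    (ha : ∀ z ∈ ball (0 : ℂ) 1, HasSum (fun k => z ^ k • a k) (θ z))
    (s : Finset ℤ) (f : ℤ → Nm) (g : ℤ → Np) :
    0 ≤ ∑ x ∈ s, ‖f x‖ ^ 2 + ∑ x ∈ s, ‖g x‖ ^ 2 +
      2 * (∑ x' ∈ s, ∑ x ∈ s, inner ℂ (g x') (symb a (x' - x) (f x))).re := by
  have hcont : Continuous (fun r : ℝ => ∑ x ∈ s, ‖f x‖ ^ 2 + ∑ x ∈ s, ‖g x‖ ^ 2 +
      2 * (∑ x' ∈ s, ∑ x ∈ s,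
        inner ℂ (g x') (symb (fun k => (r : ℂ) ^ k • a k) (x' - x) (f x))).re) := by
    have : ∀ n : ℤ, ∀ u : Nm, Continuous (fun r : ℝ => symb (fun k => (r : ℂ) ^ k • a k) n u) := by
      intro n u
      unfold symb
      split_ifs
      · simp only [_root_.smul_apply]
        fun_prop
      · simp only [_root_.zero_apply]
        fun_prop
    fun_prop
  have ht := (hcont.tendsto 1).mono_left (nhdsWithin_le_nhds (s := Set.Iio 1))
  have hev : ∀ᶠ r : ℝ in nhdsWithin 1 (Set.Iio 1), r ∈ Set.Ioo (0:ℝ) 1 :=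
    Ioo_mem_nhdsLT (by norm_num)
  have := ge_of_tendsto ht (hev.mono fun r hr =>
    toeplitz_pos_r θ hθ hcontr a ha r hr.1.le hr.2 s f g)
  simpa using this

/-- Scattering space data. -/
structure ScatData {Nm Np H : Type*}
    [NormedAddCommGroup Nm] [InnerProductSpace ℂ Nm]
    [NormedAddCommGroup Np] [InnerProductSpace ℂ Np]
    [NormedAddCommGroup H] [InnerProductSpace ℂ H]
    (S : ℤ → (Nm →L[ℂ] Np)) (φ : ℤ → (Nm →L[ℂ] H)) (ψ : ℤ → (Np →L[ℂ] H)) : Prop where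
  hφφ : ∀ m n u u', inner ℂ (φ m u) (φ n u') = if m = n then inner ℂ u u' else 0
  hψψ : ∀ m n v v', inner ℂ (ψ m v) (ψ n v') = if m = n then inner ℂ v v' else 0
  hψφ : ∀ m n v u, inner ℂ (ψ m v) (φ n u) = inner ℂ v (S (m - n) u)
  dense : (Submodule.span ℂ {h : H | (∃ n u, h = φ n u) ∨ ∃ n v, h = ψ n v}).topologicalClosure = ⊤

theorem exists_scat_aux.{u} {Nm Np V : Type u}
    [NormedAddCommGroup Nm] [InnerProductSpace ℂ Nm] [CompleteSpace Nm]
    [NormedAddCommGroup Np] [InnerProductSpace ℂ Np] [CompleteSpace Np]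
    [NormedAddCommGroup V] [InnerProductSpace ℂ V] [CompleteSpace V]
    (π₁ : V →L[ℂ] Np) (π₂ : V →L[ℂ] Nm) (ι₁ : Np →L[ℂ] V) (ι₂ : Nm →L[ℂ] V)
    (p11 : ∀ v, π₁ (ι₁ v) = v) (p12 : ∀ v, π₁ (ι₂ v) = 0)
    (p21 : ∀ v, π₂ (ι₁ v) = 0) (p22 : ∀ v, π₂ (ι₂ v) = v)
    (hin : ∀ v w : V, inner ℂ v w = inner ℂ (π₁ v) (π₁ w) + inner ℂ (π₂ v) (π₂ w))
    (hdec : ∀ v : V, v = ι₁ (π₁ v) + ι₂ (π₂ v))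
    (S : ℤ → (Nm →L[ℂ] Np))
    (hpos : ∀ (s : Finset ℤ) (f : ℤ → Nm) (g : ℤ → Np),
      0 ≤ ∑ x ∈ s, ‖f x‖ ^ 2 + ∑ x ∈ s, ‖g x‖ ^ 2 +
      2 * (∑ x' ∈ s, ∑ x ∈ s, inner ℂ (g x') (S (x' - x) (f x))).re) :
    ∃ (H : Type u) (_ : NormedAddCommGroup H) (_ : InnerProductSpace ℂ H)
      (_ : CompleteSpace H) (φ : ℤ → (Nm →L[ℂ] H)) (ψ : ℤ → (Np →L[ℂ] H)),
      ScatData S φ ψ := by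
  let K : Matrix ℤ ℤ (V →L[ℂ] V) := Matrix.of fun x y =>
    (if x = y then (1 : V →L[ℂ] V) else 0) + adjoint π₁ ∘L S (x - y) ∘L π₂
      + adjoint π₂ ∘L adjoint (S (y - x)) ∘L π₁
  have hK : ∀ x y v w, inner ℂ (K x y v) w = (if x = y then inner ℂ v w else 0)
      + inner ℂ (S (x - y) (π₂ v)) (π₁ w) + inner ℂ (π₁ v) (S (y - x) (π₂ w)) := by
    intro x y v w
    simp only [K, Matrix.of_apply, _root_.add_apply, inner_add_left,
      ContinuousLinearMap.comp_apply, adjoint_inner_left]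
    split_ifs <;> simp
  have hherm : K.IsHermitian := by
    ext x y : 1
    rw [Matrix.conjTranspose_apply]
    refine ContinuousLinearMap.ext fun v => ext_inner_right ℂ fun w => ?_
    rw [ContinuousLinearMap.star_eq_adjoint, adjoint_inner_left, ← inner_conj_symm, hK, hK]
    simp only [map_add, inner_conj_symm, apply_ite (starRingEnd ℂ), map_zero, eq_comm]
    ring
  have hps : K.PosSemidef := by
    have htf := (RKHS.posSemidef_tfae (K := K)).out 0 2
    refine htf.mpr ⟨hherm, fun vv => ?_⟩
    have hp := hpos vv.support (fun x => π₂ (vv x)) (fun x => π₁ (vv x))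
    have : (vv.sum fun x w ↦ vv.sum fun x' w' ↦ inner ℂ (K x' x w) w') =
      ((∑ x ∈ vv.support, ‖π₂ (vv x)‖ ^ 2 + ∑ x ∈ vv.support, ‖π₁ (vv x)‖ ^ 2 : ℝ) : ℂ) +
      (starRingEnd ℂ) (∑ x' ∈ vv.support, ∑ x ∈ vv.support,
        inner ℂ (π₁ (vv x')) (S (x' - x) (π₂ (vv x)))) +
      (∑ x' ∈ vv.support, ∑ x ∈ vv.support,
        inner ℂ (π₁ (vv x')) (S (x' - x) (π₂ (vv x)))) := by
      simp only [Finsupp.sum, hK, Finset.sum_add_distrib]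
      congr 1
      congr 1
      · push_cast
        rw [← Finset.sum_add_distrib]
        refine Finset.sum_congr rfl fun x hx => ?_
        rw [Finset.sum_ite_eq' , if_pos hx, hin, inner_self_eq_norm_sq_to_K,
          inner_self_eq_norm_sq_to_K, add_comm]
        rfl
      · simp only [map_sum, inner_conj_symm]
        exact Finset.sum_comm
    rw [this]
    simp only [RCLike.re_to_complex, Complex.add_re, Complex.conj_re, Complex.ofReal_re]
    linarith
  have : Fact K.PosSemidef := ⟨hps⟩
  refine ⟨RKHS.OfKernel K, inferInstance, inferInstance, inferInstance,
    fun n => RKHS.kerFun (RKHS.OfKernel K) n ∘L ι₂,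
    fun n => RKHS.kerFun (RKHS.OfKernel K) n ∘L ι₁, ?_, ?_, ?_, ?_⟩
  · intro m n u u'
    rw [ContinuousLinearMap.comp_apply, ContinuousLinearMap.comp_apply, ← RKHS.kernel_inner,
      RKHS.OfKernel.kernel_ofKernel, hK]
    simp [p12, p22, hin, eq_comm]
  · intro m n u u'
    rw [ContinuousLinearMap.comp_apply, ContinuousLinearMap.comp_apply, ← RKHS.kernel_inner,
      RKHS.OfKernel.kernel_ofKernel, hK]
    simp [p11, p21, hin, eq_comm]
  · intro m n u u'
    rw [ContinuousLinearMap.comp_apply, ContinuousLinearMap.comp_apply, ← RKHS.kernel_inner,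
      RKHS.OfKernel.kernel_ofKernel, hK]
    simp [p11, p21, p12, p22, hin]
  · rw [eq_top_iff, ← RKHS.kerFun_dense (RKHS.OfKernel K)]
    apply Submodule.topologicalClosure_mono
    rw [Submodule.span_le]
    rintro _ ⟨n, v, rfl⟩
    rw [hdec v, map_add]
    refine add_mem (Submodule.subset_span (Or.inr ⟨n, _, rfl⟩))
      (Submodule.subset_span (Or.inl ⟨n, _, rfl⟩))

theorem exists_scat.{u} {Nm Np : Type u}
    [NormedAddCommGroup Nm] [InnerProductSpace ℂ Nm] [CompleteSpace Nm]
    [NormedAddCommGroup Np] [InnerProductSpace ℂ Np] [CompleteSpace Np]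
    (S : ℤ → (Nm →L[ℂ] Np))
    (hpos : ∀ (s : Finset ℤ) (f : ℤ → Nm) (g : ℤ → Np),
      0 ≤ ∑ x ∈ s, ‖f x‖ ^ 2 + ∑ x ∈ s, ‖g x‖ ^ 2 +
      2 * (∑ x' ∈ s, ∑ x ∈ s, inner ℂ (g x') (S (x' - x) (f x))).re) :
    ∃ (H : Type u) (_ : NormedAddCommGroup H) (_ : InnerProductSpace ℂ H)
      (_ : CompleteSpace H) (φ : ℤ → (Nm →L[ℂ] H)) (ψ : ℤ → (Np →L[ℂ] H)),
      ScatData S φ ψ := by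
  let V := WithLp 2 (Np × Nm)
  let e : V ≃L[ℂ] (Np × Nm) := WithLp.prodContinuousLinearEquiv 2 ℂ Np Nm
  let π₁ : V →L[ℂ] Np := ContinuousLinearMap.fst ℂ Np Nm ∘L (e : V →L[ℂ] (Np × Nm))
  let π₂ : V →L[ℂ] Nm := ContinuousLinearMap.snd ℂ Np Nm ∘L (e : V →L[ℂ] (Np × Nm))
  let ι₁ : Np →L[ℂ] V := (e.symm : (Np × Nm) →L[ℂ] V) ∘L ContinuousLinearMap.inl ℂ Np Nm
  let ι₂ : Nm →L[ℂ] V := (e.symm : (Np × Nm) →L[ℂ] V) ∘L ContinuousLinearMap.inr ℂ Np Nm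
  have p11 : ∀ v, π₁ (ι₁ v) = v := fun v => by simp [π₁, ι₁]
  have p12 : ∀ v, π₁ (ι₂ v) = 0 := fun v => by simp [π₁, ι₂]
  have p21 : ∀ v, π₂ (ι₁ v) = 0 := fun v => by simp [π₂, ι₁]
  have p22 : ∀ v, π₂ (ι₂ v) = v := fun v => by simp [π₂, ι₂]
  have hin : ∀ v w : V, inner ℂ v w = inner ℂ (π₁ v) (π₁ w) + inner ℂ (π₂ v) (π₂ w) := by
    intro v w
    rw [WithLp.prod_inner_apply]
    rfl
  have hdec : ∀ v : V, v = ι₁ (π₁ v) + ι₂ (π₂ v) := by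
    intro v
    apply e.injective
    rw [map_add]
    ext <;> simp [π₁, π₂, ι₁, ι₂]
  exact exists_scat_aux π₁ π₂ ι₁ ι₂ p11 p12 p21 p22 hin hdec S hpos

section block
variable {X Nm Np : Type*}
    [NormedAddCommGroup X] [InnerProductSpace ℂ X] [CompleteSpace X]
    [NormedAddCommGroup Nm] [InnerProductSpace ℂ Nm] [CompleteSpace Nm]
    [NormedAddCommGroup Np] [InnerProductSpace ℂ Np] [CompleteSpace Np]
    (A : X →L[ℂ] X) (B : Nm →L[ℂ] X) (C : X →L[ℂ] Np) (D : Nm →L[ℂ] Np)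

theorem blockOp_apply (x : X) (u : Nm) :
    blockOp A B C D (WithLp.toLp 2 (x, u)) = WithLp.toLp 2 (A x + B u, C x + D u) := by
  simp [blockOp]

theorem adjoint_blockOp : adjoint (blockOp A B C D) =
    blockOp (adjoint A) (adjoint C) (adjoint B) (adjoint D) := by
  symm
  rw [ContinuousLinearMap.eq_adjoint_iff]
  rintro ⟨x, v⟩ ⟨y, u⟩
  rw [blockOp_apply, blockOp_apply]
  simp only [WithLp.prod_inner_apply, inner_add_left, inner_add_right, adjoint_inner_left]
  ring

theorem isUnitaryOp_blockOp_iff : IsUnitaryOp (blockOp A B C D) ↔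
    (∀ x u, adjoint A (A x + B u) + adjoint C (C x + D u) = x ∧
      adjoint B (A x + B u) + adjoint D (C x + D u) = u) ∧
    (∀ x v, A (adjoint A x + adjoint C v) + B (adjoint B x + adjoint D v) = x ∧
      C (adjoint A x + adjoint C v) + D (adjoint B x + adjoint D v) = v) := by
  unfold IsUnitaryOp
  rw [adjoint_blockOp]
  constructor
  · rintro ⟨h1, h2⟩
    constructor
    · intro x u
      have := congrArg (fun T => T (WithLp.toLp 2 (x, u))) h1
      simp only [ContinuousLinearMap.comp_apply, blockOp_apply, ContinuousLinearMap.id_apply] at this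
      exact Prod.ext_iff.1 ((WithLp.toLp_injective 2) this)
    · intro x u
      have := congrArg (fun T => T (WithLp.toLp 2 (x, u))) h2
      simp only [ContinuousLinearMap.comp_apply, blockOp_apply, ContinuousLinearMap.id_apply] at this
      exact Prod.ext_iff.1 ((WithLp.toLp_injective 2) this)
  · rintro ⟨h1, h2⟩
    constructor
    · refine ContinuousLinearMap.ext ?_
      rintro ⟨x, u⟩
      simp only [ContinuousLinearMap.comp_apply, blockOp_apply, ContinuousLinearMap.id_apply]
      rw [(h1 x u).1, (h1 x u).2]
    · refine ContinuousLinearMap.ext ?_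
      rintro ⟨x, u⟩
      simp only [ContinuousLinearMap.comp_apply, blockOp_apply, ContinuousLinearMap.id_apply]
      rw [(h2 x u).1, (h2 x u).2]

/-- Taylor coefficients of the transfer function. -/
def tcoef : ℕ → (Nm →L[ℂ] Np)
  | 0 => 0
  | 1 => D
  | (k + 2) => C ∘L (A ^ k) ∘L B

variable {A B C D}

theorem norm_le_one_of_unitary (h : IsUnitaryOp (blockOp A B C D)) : ‖A‖ ≤ 1 := by
  rw [isUnitaryOp_blockOp_iff] at h
  refine ContinuousLinearMap.opNorm_le_bound _ zero_le_one fun x => ?_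
  have h1 := (h.1 x 0).1
  simp only [map_zero, add_zero] at h1
  have h2 : ‖A x‖ ^ 2 + ‖C x‖ ^ 2 = ‖x‖ ^ 2 := by
    have : inner ℂ (adjoint A (A x) + adjoint C (C x)) x = inner ℂ x x := by rw [h1]
    rw [inner_add_left, adjoint_inner_left, adjoint_inner_left, inner_self_eq_norm_sq_to_K,
      inner_self_eq_norm_sq_to_K, inner_self_eq_norm_sq_to_K] at this
    exact_mod_cast this
  rw [one_mul]
  nlinarith [norm_nonneg (A x), norm_nonneg x, sq_nonneg ‖C x‖]

theorem transfer_hasSum (h : IsUnitaryOp (blockOp A B C D)) (z : ℂ) (hz : z ∈ ball (0 : ℂ) 1) :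
    IsUnit ((1 : X →L[ℂ] X) - z • A) ∧
    HasSum (fun k => z ^ k • tcoef A B C D k)
      (z • D + (z • C) ∘L (Ring.inverse (1 - z • A)) ∘L (z • B)) := by
  have hA := norm_le_one_of_unitary h
  have hlt : ‖z • A‖ < 1 := by
    rw [norm_smul]
    have hz' : ‖z‖ < 1 := by simpa using hz
    nlinarith [norm_nonneg z, norm_nonneg A]
  refine ⟨isUnit_one_sub_of_norm_lt_one hlt, ?_⟩
  have h1 : HasSum (fun k : ℕ => (z • A) ^ k) (Ring.inverse (1 - z • A)) := by
    rw [NormedRing.inverse_one_sub _ hlt]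
    exact (summable_geometric_of_norm_lt_one hlt).hasSum
  have h2 := h1.mapL ((ContinuousLinearMap.compL ℂ Nm X Np (z • C)) ∘L
    ((ContinuousLinearMap.compL ℂ Nm X X).flip (z • B)))
  simp only [ContinuousLinearMap.comp_apply, ContinuousLinearMap.compL_apply,
    ContinuousLinearMap.flip_apply] at h2
  rw [← hasSum_nat_add_iff' 2]
  have e : (z • D + (z • C) ∘L (Ring.inverse (1 - z • A)) ∘L (z • B)) -
      ∑ i ∈ Finset.range 2, z ^ i • tcoef A B C D i =
      (z • C) ∘L (Ring.inverse (1 - z • A)) ∘L (z • B) := by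
    simp [Finset.sum_range_succ, tcoef]
  rw [e]
  have e2 : (fun k : ℕ => z ^ (k + 2) • tcoef A B C D (k + 2)) =
      fun k : ℕ => (z • C) ∘L ((z • A) ^ k) ∘L (z • B) := by
    funext k
    change z ^ (k + 2) • (C ∘L (A ^ k) ∘L B) = _
    refine ContinuousLinearMap.ext fun u => ?_
    simp [smul_pow, smul_smul]
    congr 1
    ring
  rw [e2]
  exact h2

end block

theorem exists_model.{u} {Nm Np H : Type u}
    [NormedAddCommGroup Nm] [InnerProductSpace ℂ Nm] [CompleteSpace Nm]
    [TopologicalSpace.SeparableSpace Nm]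
    [NormedAddCommGroup Np] [InnerProductSpace ℂ Np] [CompleteSpace Np]
    [TopologicalSpace.SeparableSpace Np]
    [NormedAddCommGroup H] [InnerProductSpace ℂ H] [CompleteSpace H]
    (S : ℤ → (Nm →L[ℂ] Np)) (hS : ∀ n < 0, S n = 0)
    (φ : ℤ → (Nm →L[ℂ] H)) (ψ : ℤ → (Np →L[ℂ] H)) (hd : ScatData S φ ψ) :
    ∃ (X : Type u) (_ : NormedAddCommGroup X) (_ : InnerProductSpace ℂ X)
      (_ : CompleteSpace X) (_ : TopologicalSpace.SeparableSpace X)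
      (A : X →L[ℂ] X) (B : Nm →L[ℂ] X) (C : X →L[ℂ] Np),
      IsUnitaryOp (blockOp A B C (S 0)) ∧ CloselyConnected1 A B C ∧
      ∀ k : ℕ, C ∘L (A ^ k) ∘L B = S (k + 1) := by
  -- the shift
  obtain ⟨V, hVφ, hVψ⟩ : ∃ V : H ≃ₗᵢ[ℂ] H, (∀ n u, V (φ n u) = φ (n - 1) u) ∧
      (∀ n v, V (ψ n v) = ψ (n - 1) v) := by
    have hψφ := hd.hψφ
    have hφψ : ∀ m n v u, inner ℂ (φ n u) (ψ m v) = inner ℂ (S (m - n) u) v := by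
      intro m n v u
      rw [← inner_conj_symm, hψφ, inner_conj_symm]
    have hrange : ∀ k : ℤ, (Submodule.span ℂ (Set.range (Sum.elim
        (fun p : ℤ × Nm => φ (p.1 - k) p.2)
        (fun p : ℤ × Np => ψ (p.1 - k) p.2)))).topologicalClosure = ⊤ := by
      intro k
      rw [← hd.dense]
      congr 2
      ext h
      constructor
      · rintro ⟨⟨n, u⟩ | ⟨n, v⟩, rfl⟩
        · exact Or.inl ⟨_, _, rfl⟩
        · exact Or.inr ⟨_, _, rfl⟩
      · rintro (⟨n, u, rfl⟩ | ⟨n, v, rfl⟩)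
        · exact ⟨Sum.inl (n + k, u), by simp⟩
        · exact ⟨Sum.inr (n + k, v), by simp⟩
    obtain ⟨V, hV⟩ := exists_unitary_of_gram
      (Sum.elim (fun p : ℤ × Nm => φ (p.1 - 0) p.2) (fun p : ℤ × Np => ψ (p.1 - 0) p.2))
      (Sum.elim (fun p : ℤ × Nm => φ (p.1 - 1) p.2) (fun p : ℤ × Np => ψ (p.1 - 1) p.2))
      (by
        rintro (⟨m, u⟩ | ⟨m, u⟩) (⟨n, v⟩ | ⟨n, v⟩) <;>
          simp [hd.hφφ, hd.hψψ, hψφ, hφψ])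
      (hrange 0) (hrange 1)
    exact ⟨V, fun n u => by simpa using hV (Sum.inl (n, u)),
      fun n u => by simpa using hV (Sum.inr (n, u))⟩
  have hVφ' : ∀ n u, V.symm (φ n u) = φ (n + 1) u := fun n u => by
    rw [LinearIsometryEquiv.symm_apply_eq, hVφ]; simp
  have hVψ' : ∀ n u, V.symm (ψ n u) = ψ (n + 1) u := fun n u => by
    rw [LinearIsometryEquiv.symm_apply_eq, hVψ]; simp
  have hVin : ∀ h k : H, inner ℂ (V h) k = inner ℂ h (V.symm k) := fun h k => by
    rw [← V.inner_map_map h, V.apply_symm_apply]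
  have hVin' : ∀ h k : H, inner ℂ (V.symm h) k = inner ℂ h (V k) := fun h k => by
    rw [← V.inner_map_map, V.apply_symm_apply]
  -- adjoint facts
  have aφφ : ∀ m n u, adjoint (φ m) (φ n u) = if m = n then u else 0 := by
    intro m n u
    refine ext_inner_left ℂ fun w => ?_
    rw [adjoint_inner_right, hd.hφφ]
    split_ifs <;> simp
  have aψψ : ∀ m n u, adjoint (ψ m) (ψ n u) = if m = n then u else 0 := by
    intro m n u
    refine ext_inner_left ℂ fun w => ?_
    rw [adjoint_inner_right, hd.hψψ]
    split_ifs <;> simp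
  have aψφ : ∀ m n u, adjoint (ψ m) (φ n u) = S (m - n) u := by
    intro m n u
    refine ext_inner_left ℂ fun w => ?_
    rw [adjoint_inner_right, hd.hψφ]
  have aφψ : ∀ m n v, adjoint (φ n) (ψ m v) = adjoint (S (m - n)) v := by
    intro m n v
    refine ext_inner_right ℂ fun w => ?_
    rw [adjoint_inner_left, adjoint_inner_left, hd.hψφ]
  have aφV : ∀ n h, adjoint (φ n) (V h) = adjoint (φ (n + 1)) h := by
    intro n h
    refine ext_inner_left ℂ fun w => ?_
    rw [adjoint_inner_right, adjoint_inner_right, ← hVin', hVφ']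
  have aψV : ∀ n h, adjoint (ψ n) (V h) = adjoint (ψ (n + 1)) h := by
    intro n h
    refine ext_inner_left ℂ fun w => ?_
    rw [adjoint_inner_right, adjoint_inner_right, ← hVin', hVψ']
  have aφV' : ∀ n h, adjoint (φ n) (V.symm h) = adjoint (φ (n - 1)) h := by
    intro n h
    refine ext_inner_left ℂ fun w => ?_
    rw [adjoint_inner_right, adjoint_inner_right, ← hVin, hVφ]
  have aψV' : ∀ n h, adjoint (ψ n) (V.symm h) = adjoint (ψ (n - 1)) h := by
    intro n h
    refine ext_inner_left ℂ fun w => ?_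
    rw [adjoint_inner_right, adjoint_inner_right, ← hVin, hVψ]
  -- the state space
  obtain ⟨X, hXc, hX⟩ : ∃ X : Submodule ℂ H, IsClosed (X : Set H) ∧ ∀ x, x ∈ X ↔
      (∀ n, 0 ≤ n → adjoint (φ n) x = 0) ∧ (∀ n < 0, adjoint (ψ n) x = 0) := by
    refine ⟨(⨅ n : {n : ℤ // 0 ≤ n}, LinearMap.ker (adjoint (φ n)).toLinearMap) ⊓
      (⨅ n : {n : ℤ // n < 0}, LinearMap.ker (adjoint (ψ n)).toLinearMap), ?_, ?_⟩
    · simp only [Submodule.coe_inf, Submodule.coe_iInf]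
      refine IsClosed.inter (isClosed_iInter fun n => ?_) (isClosed_iInter fun n => ?_)
      · exact (adjoint (φ n)).isClosed_ker
      · exact (adjoint (ψ n)).isClosed_ker
    · intro x
      simp [Submodule.mem_iInf]
  haveI : CompleteSpace X := hXc.completeSpace_coe
  set P : H →L[ℂ] X := X.orthogonalProjection with hP
  have hPin : ∀ (x : X) (h : H), inner ℂ x (P h) = inner ℂ (x : H) h := fun x h => by
    rw [hP, Submodule.inner_orthogonalProjection_eq_of_mem_left]
  have hPin' : ∀ (x : X) (h : H), inner ℂ (P h) x = inner ℂ h (x : H) := fun x h => by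
    rw [← inner_conj_symm, hPin, inner_conj_symm]
  have hPx : ∀ x : X, P (x : H) = x := fun x => by
    refine ext_inner_left ℂ fun w => ?_
    rw [hPin]; rfl
  have hPφ : ∀ n, 0 ≤ n → ∀ u, P (φ n u) = 0 := fun n hn u => by
    refine ext_inner_left ℂ fun w => ?_
    rw [hPin, ← adjoint_inner_left, ((hX w).1 w.2).1 n hn]; simp
  have hPψ : ∀ n < 0, ∀ u, P (ψ n u) = 0 := fun n hn u => by
    refine ext_inner_left ℂ fun w => ?_
    rw [hPin, ← adjoint_inner_left, ((hX w).1 w.2).2 n hn]; simp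
  have F1 : ∀ y : H, (∀ n, 1 ≤ n → adjoint (φ n) y = 0) → (∀ n < 0, adjoint (ψ n) y = 0) →
      (P y : H) = y - φ 0 (adjoint (φ 0) y) := by
    intro y h1 h2
    have hm : y - φ 0 (adjoint (φ 0) y) ∈ X := by
      rw [hX]
      constructor
      · intro n hn
        rw [map_sub, aφφ]
        split_ifs with h
        · rw [h, sub_self]
        · rw [h1 n (by omega), sub_zero]
      · intro n hn
        rw [map_sub, aψφ, h2 n hn, hS _ (by omega)]; simp
    have := hPx ⟨_, hm⟩
    simp only [map_sub, hPφ 0 le_rfl, sub_zero] at this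
    rw [this]
  have F2 : ∀ y : H, (∀ n, 0 ≤ n → adjoint (φ n) y = 0) → (∀ n < -1, adjoint (ψ n) y = 0) →
      (P y : H) = y - ψ (-1) (adjoint (ψ (-1)) y) := by
    intro y h1 h2
    have hm : y - ψ (-1) (adjoint (ψ (-1)) y) ∈ X := by
      rw [hX]
      constructor
      · intro n hn
        rw [map_sub, aφψ, h1 n hn, hS _ (by omega)]; simp
      · intro n hn
        rw [map_sub, aψψ]
        split_ifs with h
        · rw [h, sub_self]
        · rw [h2 n (by omega), sub_zero]
    have := hPx ⟨_, hm⟩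
    simp only [map_sub, hPψ (-1) (by norm_num), sub_zero] at this
    rw [this]
  let Vc : H →L[ℂ] H := (V.toContinuousLinearEquiv : H →L[ℂ] H)
  let A : X →L[ℂ] X := P ∘L Vc ∘L X.subtypeL
  let B : Nm →L[ℂ] X := P ∘L φ (-1)
  let C : X →L[ℂ] Np := adjoint (ψ 0) ∘L X.subtypeL
  have hA : ∀ x, A x = P (V (x : H)) := fun x => rfl
  have hB : ∀ u, B u = P (φ (-1) u) := fun x => rfl
  have hC : ∀ x, C x = adjoint (ψ 0) (x : H) := fun x => rfl
  have hA' : ∀ x, adjoint A x = P (V.symm (x : H)) := fun x => by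
    refine ext_inner_left ℂ fun w => ?_
    rw [adjoint_inner_right, hA, hPin, hPin', hVin]
  have hB' : ∀ x, adjoint B x = adjoint (φ (-1)) (x : H) := fun x => by
    refine ext_inner_left ℂ fun w => ?_
    rw [adjoint_inner_right, adjoint_inner_right, hB, hPin']
  have hC' : ∀ v, adjoint C v = P (ψ 0 v) := fun x => by
    refine ext_inner_left ℂ fun w => ?_
    rw [adjoint_inner_right, hC, hPin, adjoint_inner_left]
  clear_value A B C
  have hx1 : ∀ (x : X) n, 0 ≤ n → adjoint (φ n) (x : H) = 0 := fun x => ((hX x).1 x.2).1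
  have hx2 : ∀ (x : X) n, n < 0 → adjoint (ψ n) (x : H) = 0 := fun x => ((hX x).1 x.2).2
  have G1 : ∀ h, (∀ n, 0 ≤ n → adjoint (φ n) h = 0) → A (P h) = P (V h) := by
    intro h hh
    refine ext_inner_left ℂ fun w => ?_
    rw [← adjoint_inner_left, hA', hPin, hPin, F1, inner_sub_left, ← adjoint_inner_right,
      hh 0 le_rfl, inner_zero_right, sub_zero, hVin']
    · intro n hn; rw [aφV', hx1 _ _ (by omega)]
    · intro n hn; rw [aψV', hx2 _ _ (by omega)]
  have G2 : ∀ h, (∀ n, 0 ≤ n → adjoint (φ n) h = 0) → C (P h) = adjoint (ψ 0) h := by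
    intro h hh
    refine ext_inner_left ℂ fun w => ?_
    rw [← adjoint_inner_left, hC', hPin, F1, inner_sub_left, ← adjoint_inner_right (φ 0),
      hh 0 le_rfl, inner_zero_right, sub_zero, adjoint_inner_right]
    · intro n hn; rw [aφψ, hS _ (by omega)]; simp
    · intro n hn; rw [aψψ, if_neg (by omega)]
  have G3 : ∀ h, (∀ n < 0, adjoint (ψ n) h = 0) → adjoint A (P h) = P (V.symm h) := by
    intro h hh
    refine ext_inner_left ℂ fun w => ?_
    rw [adjoint_inner_right, hA, hPin, hPin, F2, inner_sub_left, ← adjoint_inner_right,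
      hh (-1) (by norm_num), inner_zero_right, sub_zero, hVin]
    · intro n hn; rw [aφV, hx1 _ _ (by omega)]
    · intro n hn; rw [aψV, hx2 _ _ (by omega)]
  have AB : ∀ (k : ℕ) u, (A ^ k) (B u) = P (φ (-1 - k) u) := by
    intro k u
    induction k with
    | zero => simp [hB]
    | succ k ih =>
      rw [pow_succ', ContinuousLinearMap.mul_apply, ih, G1, hVφ]
      · congr 3; push_cast; ring
      · intro n hn; rw [aφφ, if_neg (by omega)]
  have AC : ∀ (k : ℕ) v, (adjoint A ^ k) (adjoint C v) = P (ψ k v) := by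
    intro k u
    induction k with
    | zero => simp [hC']
    | succ k ih =>
      rw [pow_succ', ContinuousLinearMap.mul_apply, ih, G3, hVψ']
      · congr 3
      · intro n hn; rw [aψψ, if_neg (by omega)]
  have hspan : (Submodule.span ℂ {x : X | ∃ n, (∃ u, x = P (φ n u)) ∨
      (∃ v, x = P (ψ n v))}).topologicalClosure = ⊤ := by
    rw [← Submodule.dense_iff_topologicalClosure_eq_top]
    have hdn := Submodule.dense_iff_topologicalClosure_eq_top.2 hd.dense
    have hsurj : Function.Surjective P := fun x => ⟨x, hPx x⟩
    have := hsurj.denseRange.dense_image P.continuous hdn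
    refine this.mono ?_
    rintro _ ⟨h, hh, rfl⟩
    have h2 := Submodule.mem_map_of_mem (f := P.toLinearMap) hh
    rw [Submodule.map_span] at h2
    refine Submodule.span_mono ?_ h2
    rintro _ ⟨k, (⟨n, u, rfl⟩ | ⟨n, u, rfl⟩), rfl⟩
    · exact ⟨n, Or.inl ⟨u, rfl⟩⟩
    · exact ⟨n, Or.inr ⟨u, rfl⟩⟩
  have hsep : TopologicalSpace.SeparableSpace X := by
    have h1 : TopologicalSpace.IsSeparable {x : X | ∃ n, (∃ u, x = P (φ n u)) ∨
      (∃ v, x = P (ψ n v))} := by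
      have : {x : X | ∃ n, (∃ u, x = P (φ n u)) ∨ (∃ v, x = P (ψ n v))} =
        ⋃ n : ℤ, (Set.range (P ∘L φ n) ∪ Set.range (P ∘L ψ n)) := by
        ext x
        simp [eq_comm]
      rw [this]
      refine TopologicalSpace.IsSeparable.iUnion fun n => ?_
      exact (TopologicalSpace.isSeparable_range (P ∘L φ n).continuous).union
        (TopologicalSpace.isSeparable_range (P ∘L ψ n).continuous)
    have h2 := (h1.span (R := ℂ)).closure
    rw [← Submodule.topologicalClosure_coe, hspan, Submodule.top_coe] at h2
    exact TopologicalSpace.isSeparable_univ_iff.1 h2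
  refine ⟨X, inferInstance, inferInstance, inferInstance, hsep, A, B, C, ?_, ?_, ?_⟩
  · rw [isUnitaryOp_blockOp_iff]
    constructor
    · intro x u
      set h : H := V ((x : H) + φ 0 u) with hh
      have e1 : A x + B u = P h := by
        rw [hA, hB, hh, map_add, map_add, hVφ]; simp
      have e2 : C x + S 0 u = adjoint (ψ (-1)) h := by
        rw [hC, hh, aψV, map_add, aψφ]; simp
      have e3 := F2 h (by
          intro n hn
          rw [hh, aφV, map_add, hx1 _ _ (by omega), aφφ, if_neg (by omega), add_zero]) (by
          intro n hn
          rw [hh, aψV, map_add, hx2 _ _ (by omega), aψφ, hS _ (by omega)]; simp)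
      rw [e1, e2, hA', hC', hB', e3]
      constructor
      · rw [map_sub, hVψ', map_sub]
        simp only [neg_add_cancel, sub_add_cancel]
        rw [hh, V.symm_apply_apply, map_add, hPx, hPφ 0 le_rfl, add_zero]
      · rw [map_sub, aφψ]
        simp only [sub_self, sub_add_cancel]
        rw [hh, aφV, map_add, aφφ]
        simp [hx1]
    · intro x v
      set h : H := V.symm ((x : H) + ψ (-1) v) with hh
      have e1 : adjoint A x + adjoint C v = P h := by
        rw [hA', hC', hh, map_add, map_add, hVψ']; simp
      have e2 : adjoint B x + adjoint (S 0) v = adjoint (φ 0) h := by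
        rw [hB', hh, aφV', map_add, aφψ]; simp
      have e3 := F1 h (by
          intro n hn
          rw [hh, aφV', map_add, hx1 _ _ (by omega), aφψ, hS _ (by omega)]; simp) (by
          intro n hn
          rw [hh, aψV', map_add, hx2 _ _ (by omega), aψψ, if_neg (by omega), add_zero])
      rw [e1, e2, hA, hC, hB, e3]
      constructor
      · rw [map_sub, hVφ, map_sub]
        simp only [zero_sub, sub_add_cancel]
        rw [hh, V.apply_symm_apply, map_add, hPx, hPψ (-1) (by norm_num), add_zero]
      · rw [map_sub, aψφ]
        simp only [sub_self, sub_add_cancel]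
        rw [hh, aψV', map_add, aψψ]
        simp [hx2]
  · unfold CloselyConnected1
    rw [eq_top_iff, ← hspan]
    apply Submodule.topologicalClosure_mono
    rw [Submodule.span_le]
    rintro _ ⟨n, ⟨u, rfl⟩ | ⟨v, rfl⟩⟩
    · by_cases hn : 0 ≤ n
      · rw [hPφ n hn]; exact zero_mem _
      · obtain ⟨k, rfl⟩ : ∃ k : ℕ, n = -1 - k := ⟨(-1 - n).toNat, by omega⟩
        refine Submodule.subset_span ⟨List.replicate k true, B u, Or.inl ⟨u, rfl⟩, ?_⟩
        simp [AB]
    · by_cases hn : n < 0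
      · rw [hPψ n hn]; exact zero_mem _
      · obtain ⟨k, rfl⟩ : ∃ k : ℕ, n = k := ⟨n.toNat, by omega⟩
        refine Submodule.subset_span ⟨List.replicate k false, adjoint C v, Or.inr ⟨v, rfl⟩, ?_⟩
        simp [AC]
  · intro k
    refine ContinuousLinearMap.ext fun u => ?_
    rw [ContinuousLinearMap.comp_apply, ContinuousLinearMap.comp_apply, AB, G2, aψφ]
    · congr 2; ring
    · intro n hn; rw [aφφ, if_neg (by omega)]

section uniq
variable {X X' Nm Np : Type*}
    [NormedAddCommGroup X] [InnerProductSpace ℂ X] [CompleteSpace X]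
    [NormedAddCommGroup X'] [InnerProductSpace ℂ X'] [CompleteSpace X']
    [NormedAddCommGroup Nm] [InnerProductSpace ℂ Nm] [CompleteSpace Nm]
    [NormedAddCommGroup Np] [InnerProductSpace ℂ Np] [CompleteSpace Np]
    {A : X →L[ℂ] X} {B : Nm →L[ℂ] X} {C : X →L[ℂ] Np} {D : Nm →L[ℂ] Np}
    {A' : X' →L[ℂ] X'} {B' : Nm →L[ℂ] X'} {C' : X' →L[ℂ] Np}

theorem unitary_dual (h : IsUnitaryOp (blockOp A B C D)) :
    IsUnitaryOp (blockOp (adjoint A) (adjoint C) (adjoint B) (adjoint D)) := by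
  rw [← adjoint_blockOp]
  refine ⟨?_, ?_⟩
  · rw [adjoint_adjoint]; exact h.2
  · rw [adjoint_adjoint]; exact h.1

theorem rel_AA (h : IsUnitaryOp (blockOp A B C D)) (x : X) :
    adjoint A (A x) = x - adjoint C (C x) := by
  rw [isUnitaryOp_blockOp_iff] at h
  have := (h.1 x 0).1
  simp only [map_zero, add_zero] at this
  exact eq_sub_of_add_eq this

theorem rel_AB (h : IsUnitaryOp (blockOp A B C D)) (u : Nm) :
    adjoint A (B u) = - adjoint C (D u) := by
  rw [isUnitaryOp_blockOp_iff] at h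
  have := (h.1 0 u).1
  simp only [map_zero, zero_add] at this
  exact eq_neg_of_add_eq_zero_left this

theorem rel_BA (h : IsUnitaryOp (blockOp A B C D)) (x : X) :
    adjoint B (A x) = - adjoint D (C x) := by
  rw [isUnitaryOp_blockOp_iff] at h
  have := (h.1 x 0).2
  simp only [map_zero, add_zero] at this
  exact eq_neg_of_add_eq_zero_left this

theorem rel_BB (h : IsUnitaryOp (blockOp A B C D)) (u : Nm) :
    adjoint B (B u) = u - adjoint D (D u) := by
  rw [isUnitaryOp_blockOp_iff] at h
  have := (h.1 0 u).2
  simp only [map_zero, zero_add] at this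
  exact eq_sub_of_add_eq this

theorem gram_ctrl (h : IsUnitaryOp (blockOp A B C D)) (h' : IsUnitaryOp (blockOp A' B' C' D))
    (hT : ∀ (k : ℕ) u, C' ((A' ^ k) (B' u)) = C ((A ^ k) (B u))) :
    ∀ (n m : ℕ) (u v : Nm), inner ℂ ((A ^ n) (B u)) ((A ^ m) (B v)) =
      inner ℂ ((A' ^ n) (B' u)) ((A' ^ m) (B' v)) := by
  have key : ∀ {Y : Type _} [NormedAddCommGroup Y] [InnerProductSpace ℂ Y] [CompleteSpace Y]
      (a : Y →L[ℂ] Y) (n : ℕ) (y : Y), (a ^ (n + 1)) y = a ((a ^ n) y) := by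
    intro Y _ _ _ a n y; rw [pow_succ']; rfl
  have key' : ∀ (n : ℕ) (y : X'), (A' ^ (n + 1)) y = A' ((A' ^ n) y) := by
    intro n y; rw [pow_succ']; rfl
  intro n
  induction n with
  | zero =>
    intro m u v
    cases m with
    | zero =>
      simp only [pow_zero, one_apply_eq_self]
      rw [← adjoint_inner_right, ← adjoint_inner_right, rel_BB h, rel_BB h']
    | succ m =>
      simp only [pow_zero, one_apply_eq_self]
      rw [key, key', ← adjoint_inner_right, ← adjoint_inner_right, rel_BA h, rel_BA h', hT]
  | succ n ih =>
    intro m u v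
    cases m with
    | zero =>
      simp only [pow_zero, one_apply_eq_self]
      rw [key, key', ← adjoint_inner_left, ← adjoint_inner_left, rel_BA h, rel_BA h', hT]
    | succ m =>
      rw [key, key, key', key', ← adjoint_inner_right A, ← adjoint_inner_right A', rel_AA h, rel_AA h',
        inner_sub_right, inner_sub_right, ih, adjoint_inner_right, adjoint_inner_right, hT, hT]

theorem adjoint_pow_apply {Y : Type*} [NormedAddCommGroup Y] [InnerProductSpace ℂ Y]
    [CompleteSpace Y] (a : Y →L[ℂ] Y) (n : ℕ) (x y : Y) :
    inner ℂ ((a ^ n) x) y = inner ℂ x (((adjoint a) ^ n) y) := by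
  induction n generalizing x y with
  | zero => rfl
  | succ n ih =>
    have e1 : (a ^ (n + 1)) x = (a ^ n) (a x) := by rw [pow_succ]; rfl
    have e2 : ((adjoint a) ^ (n + 1)) y = adjoint a (((adjoint a) ^ n) y) := by
      rw [pow_succ']; rfl
    rw [e1, e2, ih, adjoint_inner_right]

theorem dual_coef (hT : ∀ (k : ℕ) u, C' ((A' ^ k) (B' u)) = C ((A ^ k) (B u))) (k : ℕ) (v : Np) :
    adjoint B' (((adjoint A') ^ k) (adjoint C' v)) =
      adjoint B (((adjoint A) ^ k) (adjoint C v)) := by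
  refine ext_inner_left ℂ fun u => ?_
  rw [adjoint_inner_right, adjoint_inner_right, ← adjoint_pow_apply, ← adjoint_pow_apply,
    adjoint_inner_right, adjoint_inner_right, hT]

/-- The generating family of a closely connected conservative system. -/
def genFam (A : X →L[ℂ] X) (B : Nm →L[ℂ] X) (C : X →L[ℂ] Np) : (ℕ × Nm) ⊕ (ℕ × Np) → X
  | Sum.inl p => (A ^ p.1) (B p.2)
  | Sum.inr p => ((adjoint A) ^ p.1) (adjoint C p.2)

theorem genFam_dense (h : IsUnitaryOp (blockOp A B C D)) (hc : CloselyConnected1 A B C) :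
    (Submodule.span ℂ (Set.range (genFam A B C))).topologicalClosure = ⊤ := by
  set M := Submodule.span ℂ (Set.range (genFam A B C)) with hM
  have m1 : ∀ (n : ℕ) u, (A ^ n) (B u) ∈ M := fun n u =>
    Submodule.subset_span ⟨Sum.inl (n, u), rfl⟩
  have m2 : ∀ (n : ℕ) v, ((adjoint A) ^ n) (adjoint C v) ∈ M := fun n v =>
    Submodule.subset_span ⟨Sum.inr (n, v), rfl⟩
  have m10 : ∀ u, B u ∈ M := fun u => m1 0 u
  have m20 : ∀ v, adjoint C v ∈ M := fun v => m2 0 v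
  have hd := unitary_dual h
  have iA : ∀ x ∈ M, A x ∈ M := by
    intro x hx
    have : M ≤ M.comap (A : X →ₗ[ℂ] X) := by
      rw [hM, Submodule.span_le]
      rintro _ ⟨⟨n, u⟩ | ⟨n, v⟩, rfl⟩
      · have : A ((A ^ n) (B u)) = (A ^ (n + 1)) (B u) := by rw [pow_succ']; rfl
        change A ((A ^ n) (B u)) ∈ M
        rw [this]; exact m1 _ _
      · change A (((adjoint A) ^ n) (adjoint C v)) ∈ M
        cases n with
        | zero =>
          have := rel_AB hd v
          rw [adjoint_adjoint, adjoint_adjoint] at this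
          change A (adjoint C v) ∈ M
          rw [this]
          exact neg_mem (m10 _)
        | succ n =>
          have e : ((adjoint A) ^ (n + 1)) (adjoint C v) =
            adjoint A (((adjoint A) ^ n) (adjoint C v)) := by rw [pow_succ']; rfl
          have := rel_AA hd (((adjoint A) ^ n) (adjoint C v))
          rw [adjoint_adjoint, adjoint_adjoint] at this
          rw [e, this]
          exact sub_mem (m2 _ _) (m10 _)
    exact this hx
  have iA' : ∀ x ∈ M, adjoint A x ∈ M := by
    intro x hx
    have : M ≤ M.comap (adjoint A : X →ₗ[ℂ] X) := by
      rw [hM, Submodule.span_le]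
      rintro _ ⟨⟨n, u⟩ | ⟨n, v⟩, rfl⟩
      · change adjoint A ((A ^ n) (B u)) ∈ M
        cases n with
        | zero =>
          change adjoint A (B u) ∈ M
          rw [rel_AB h]
          exact neg_mem (m20 _)
        | succ n =>
          have e : (A ^ (n + 1)) (B u) = A ((A ^ n) (B u)) := by rw [pow_succ']; rfl
          rw [e, rel_AA h]
          exact sub_mem (m1 _ _) (m20 _)
      · have : adjoint A (((adjoint A) ^ n) (adjoint C v)) =
          ((adjoint A) ^ (n + 1)) (adjoint C v) := by rw [pow_succ']; rfl
        change adjoint A (((adjoint A) ^ n) (adjoint C v)) ∈ M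
        rw [this]; exact m2 _ _
    exact this hx
  rw [eq_top_iff, ← hc]
  apply Submodule.topologicalClosure_mono
  rw [Submodule.span_le]
  rintro _ ⟨w, y, hy, rfl⟩
  have hyM : y ∈ M := by
    rcases hy with ⟨u, rfl⟩ | ⟨v, rfl⟩
    · exact m10 _
    · exact m20 _
  change _ ∈ M
  induction w with
  | nil => exact hyM
  | cons b w ih =>
    rw [List.map_cons, List.prod_cons]
    cases b
    · exact iA' _ ih
    · exact iA _ ih

theorem unique_of_coef (h : IsUnitaryOp (blockOp A B C D)) (h' : IsUnitaryOp (blockOp A' B' C' D))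
    (hc : CloselyConnected1 A B C) (hc' : CloselyConnected1 A' B' C')
    (hT : ∀ (k : ℕ) u, C' ((A' ^ k) (B' u)) = C ((A ^ k) (B u))) :
    ∃ U : X ≃ₗᵢ[ℂ] X', (∀ x : X, A' (U x) = U (A x)) ∧ (∀ u : Nm, B' u = U (B u)) ∧
            (∀ x : X, C' (U x) = C x) := by
  have hd := unitary_dual h
  have hd' := unitary_dual h'
  have hT' := dual_coef hT
  have mixed : ∀ (n m : ℕ) u v, inner ℂ ((A ^ n) (B u)) (((adjoint A) ^ m) (adjoint C v)) =
      inner ℂ ((A' ^ n) (B' u)) (((adjoint A') ^ m) (adjoint C' v)) := by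
    intro n m u v
    rw [← adjoint_pow_apply, ← adjoint_pow_apply, adjoint_inner_right, adjoint_inner_right]
    have e1 : (A ^ m) ((A ^ n) (B u)) = (A ^ (m + n)) (B u) := by rw [pow_add]; rfl
    have e2 : (A' ^ m) ((A' ^ n) (B' u)) = (A' ^ (m + n)) (B' u) := by rw [pow_add]; rfl
    rw [e1, e2, hT]
  obtain ⟨U, hU⟩ := exists_unitary_of_gram (genFam A B C) (genFam A' B' C') (by
    rintro (⟨n, u⟩ | ⟨n, v⟩) (⟨m, u'⟩ | ⟨m, v'⟩)
    · exact gram_ctrl h h' hT n m u u'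
    · exact mixed n m u v'
    · have := congrArg (starRingEnd ℂ) (mixed m n u' v)
      rw [inner_conj_symm, inner_conj_symm] at this
      exact this
    · exact gram_ctrl hd hd' hT' n m v v') (genFam_dense h hc) (genFam_dense h' hc')
  have u1 : ∀ (n : ℕ) u, U ((A ^ n) (B u)) = (A' ^ n) (B' u) := fun n u => hU (Sum.inl (n, u))
  have u2 : ∀ (n : ℕ) v, U (((adjoint A) ^ n) (adjoint C v)) =
    ((adjoint A') ^ n) (adjoint C' v) := fun n v => hU (Sum.inr (n, v))
  have u10 : ∀ u, U (B u) = B' u := fun u => u1 0 u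
  have u20 : ∀ v, U (adjoint C v) = adjoint C' v := fun v => u2 0 v
  have ds : Dense (Submodule.span ℂ (Set.range (genFam A B C)) : Set X) :=
    Submodule.dense_iff_topologicalClosure_eq_top.2 (genFam_dense h hc)
  have eA := fun v => rel_AB hd v
  have eAA := fun v => rel_AA hd v
  have eA' := fun v => rel_AB hd' v
  have eAA' := fun v => rel_AA hd' v
  have eC := fun v => rel_BA hd v
  have eCC := fun v => rel_BB hd v
  have eC' := fun v => rel_BA hd' v
  have eCC' := fun v => rel_BB hd' v
  simp only [adjoint_adjoint] at eA eAA eA' eAA' eC eCC eC' eCC'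
  have s1 : ∀ (n : ℕ) y, (A ^ (n + 1)) y = A ((A ^ n) y) := by
    intro n y; rw [pow_succ']; rfl
  have s2 : ∀ (n : ℕ) y, (A' ^ (n + 1)) y = A' ((A' ^ n) y) := by
    intro n y; rw [pow_succ']; rfl
  have s3 : ∀ (n : ℕ) y, ((adjoint A) ^ (n + 1)) y = adjoint A (((adjoint A) ^ n) y) := by
    intro n y; rw [pow_succ']; rfl
  have s4 : ∀ (n : ℕ) y, ((adjoint A') ^ (n + 1)) y = adjoint A' (((adjoint A') ^ n) y) := by
    intro n y; rw [pow_succ']; rfl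
  refine ⟨U, ?_, fun u => (u10 u).symm, ?_⟩
  · have : A' ∘L (U : X →L[ℂ] X') = (U : X →L[ℂ] X') ∘L A := by
      refine ContinuousLinearMap.ext_on ds ?_
      rintro _ ⟨⟨n, u⟩ | ⟨n, v⟩, rfl⟩
      · change A' (U ((A ^ n) (B u))) = U (A ((A ^ n) (B u)))
        rw [u1, ← s1, u1, s2]
      · change A' (U (((adjoint A) ^ n) (adjoint C v))) = U (A (((adjoint A) ^ n) (adjoint C v)))
        cases n with
        | zero =>
          rw [u2]
          change A' (adjoint C' v) = U (A (adjoint C v))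
          rw [eA, eA', map_neg, u10]
        | succ n =>
          rw [u2, s3, s4, eAA, eAA', map_sub, u2, u10, hT']
    exact fun x => congrArg (fun T => T x) this
  · have : C' ∘L (U : X →L[ℂ] X') = C := by
      refine ContinuousLinearMap.ext_on ds ?_
      rintro _ ⟨⟨n, u⟩ | ⟨n, v⟩, rfl⟩
      · change C' (U ((A ^ n) (B u))) = C ((A ^ n) (B u))
        rw [u1, hT]
      · change C' (U (((adjoint A) ^ n) (adjoint C v))) = C (((adjoint A) ^ n) (adjoint C v))
        cases n with
        | zero =>
          rw [u2]
          change C' (adjoint C' v) = C (adjoint C v)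
          rw [eCC, eCC']
        | succ n =>
          rw [u2, s3, s4, eC, eC', hT']
    exact fun x => congrArg (fun T => T x) this

end uniq

/-- every `θ ∈ S⁰(N⁻, N⁺)` admits a closely connected conservative realization,
and this realization is unique up to unitary similarity. -/
theorem exists_unique_closely_connected_conservative_realization.{u, v}
    {Nm Np : Type u}
    [NormedAddCommGroup Nm] [InnerProductSpace ℂ Nm] [CompleteSpace Nm]
    [TopologicalSpace.SeparableSpace Nm]
    [NormedAddCommGroup Np] [InnerProductSpace ℂ Np] [CompleteSpace Np]
    [TopologicalSpace.SeparableSpace Np]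
    (θ : ℂ → (Nm →L[ℂ] Np))
    (hθ : DifferentiableOn ℂ θ (ball (0 : ℂ) 1))
    (hcontr : ∀ z ∈ ball (0 : ℂ) 1, ‖θ z‖ ≤ 1)
    (h0 : θ 0 = 0) :
    ∃ (X : Type u) (_ : NormedAddCommGroup X) (_ : InnerProductSpace ℂ X)
      (_ : CompleteSpace X) (_ : TopologicalSpace.SeparableSpace X)
      (A : X →L[ℂ] X) (B : Nm →L[ℂ] X) (C : X →L[ℂ] Np) (D : Nm →L[ℂ] Np),
      IsCCConservativeRealization θ X A B C D ∧
      ∀ (X' : Type v) (_ : NormedAddCommGroup X') (_ : InnerProductSpace ℂ X')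
        (_ : CompleteSpace X') (_ : TopologicalSpace.SeparableSpace X')
        (A' : X' →L[ℂ] X') (B' : Nm →L[ℂ] X') (C' : X' →L[ℂ] Np) (D' : Nm →L[ℂ] Np),
        IsCCConservativeRealization θ X' A' B' C' D' →
          D' = D ∧ ∃ U : X ≃ₗᵢ[ℂ] X',
            (∀ x : X, A' (U x) = U (A x)) ∧ (∀ u : Nm, B' u = U (B u)) ∧
            (∀ x : X, C' (U x) = C x) := by
  obtain ⟨a, ha⟩ : ∃ a : ℕ → (Nm →L[ℂ] Np),
      ∀ z ∈ ball (0 : ℂ) 1, HasSum (fun k => z ^ k • a k) (θ z) := by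
    refine ⟨fun k => ((Nat.factorial k : ℕ) : ℂ)⁻¹ • iteratedDeriv k θ 0, fun z hz => ?_⟩
    have := Complex.hasSum_taylorSeries_on_ball hθ hz
    have e : (fun k : ℕ => z ^ k • ((Nat.factorial k : ℕ) : ℂ)⁻¹ • iteratedDeriv k θ 0) =
        fun k : ℕ => ((Nat.factorial k : ℕ) : ℂ)⁻¹ • (z - 0) ^ k • iteratedDeriv k θ 0 := by
      funext k
      rw [sub_zero, smul_comm]
    rw [e]
    exact this
  have ha0 : a 0 = 0 := by
    have h1 := ha 0 (by simp)
    rw [h0] at h1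
    have h2 : HasSum (fun k : ℕ => (0 : ℂ) ^ k • a k) ((0 : ℂ) ^ 0 • a 0) := by
      refine hasSum_single 0 fun k hk => ?_
      rw [zero_pow hk, zero_smul]
    have h3 := h2.unique h1
    rwa [pow_zero, one_smul] at h3
  have hS : ∀ n < 0, symb a n = 0 := by
    intro n hn
    unfold symb
    split_ifs with hh
    · have : (n + 1).toNat = 0 := by omega
      rw [this, ha0]
    · rfl
  have hS0 : symb a 0 = a 1 := by simp [symb]
  have hSk : ∀ k : ℕ, symb a (k + 1) = a (k + 2) := by
    intro k
    unfold symb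
    rw [if_pos (by omega)]
    congr 1
  obtain ⟨H, _, _, _, φ, ψ, hd⟩ := exists_scat (symb a)
    (toeplitz_pos θ hθ.continuousOn hcontr a ha)
  obtain ⟨X, i1, i2, i3, i4, A, B, C, hU, hC, hT⟩ := exists_model (symb a) hS φ ψ hd
  have htc : tcoef A B C (symb a 0) = a := by
    funext k
    match k with
    | 0 => exact ha0.symm
    | 1 => exact hS0
    | (k + 2) => exact (hT k).trans (hSk k)
  refine ⟨X, i1, i2, i3, i4, A, B, C, symb a 0, ⟨hU, hC, fun z hz => ?_⟩, ?_⟩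
  · obtain ⟨h1, h2⟩ := transfer_hasSum hU z hz
    rw [htc] at h2
    exact ⟨h1, (ha z hz).unique h2⟩
  · intro X' _ _ _ _ A' B' C' D' ⟨hU', hC', hθ'⟩
    have hco : tcoef A' B' C' D' = a := by
      refine coeff_unique _ _ θ (fun z hz => ?_) ha
      rw [(hθ' z hz).2]
      exact (transfer_hasSum hU' z hz).2
    have hD : D' = symb a 0 := by
      rw [hS0, ← hco]; rfl
    subst hD
    refine ⟨rfl, unique_of_coef hU hU' hC hC' fun k u => ?_⟩
    have : C' ∘L (A' ^ k) ∘L B' = C ∘L (A ^ k) ∘L B := by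
      have h1 : tcoef A' B' C' (symb a 0) (k + 2) = tcoef A B C (symb a 0) (k + 2) := by
        rw [hco, htc]
      exact h1
    exact congrArg (fun T => T u) this
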